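/- For every MTL formula φ, every compact timed word ρ̃, every t ∈ ℝ≥0 (with t ≤ μ(ρ̃) if ρ̃ is finite) such that ind_ρ̃(t) is defined, and every 0 ≤ j < |ρ̃(t)|: ρ̃, t, j ⊨_mx ⟨φ⟩ if and only if C⁻¹(ρ̃), m_ρ̃(ind_ρ̃(t), j) ⊨_pw φ. -/

import Mathlib

/-!
The map `(k, j) ↦ bstart s k + j` (which is `mfun s k j`) is an order isomorphism from the pairs
`(k, j)` with `k < |ρ̃|` and `j < |σ̃_k|`, ordered lexicographically, onto the positions of `ρ`
(`position_lt_iff`, `exists_block`), and it preserves timestamps (`position_spec`).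
On the other side, `(k, j) ↦ (τ̃_k, j)` identifies the same pairs with the admissible points of the
mixed semantics at which `φ_Σ` holds (`atTime_stamp`, `exists_stamp`, `adm_stamp`).

The compilation guards the right argument of every `U` by `φ_Σ` and makes the left one vacuous at
points violating `φ_Σ`, so both the witness and the constraint of a compiled `U` range over exactly
the points that correspond to positions of `ρ`. The equivalence follows by induction on the formula
(`pcompile_correct_block`).
-/

/-! Core definitions: timed words, compact timed words, MTL, semantics. -/

/-- Timed words over an alphabet `A`: finite or infinite (`len : ℕ∞`) sequences of
actions with monotonically nondecreasing nonnegative timestamps; infinite timed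
words are time-divergent. -/
structure TimedWord (A : Type) where
  len : ℕ∞
  act : ℕ → A
  time : ℕ → ℝ
  nonneg : ∀ i : ℕ, (i : ℕ∞) < len → 0 ≤ time i
  mono : ∀ i j : ℕ, i ≤ j → (j : ℕ∞) < len → time i ≤ time j
  div : len = ⊤ → ∀ M : ℝ, ∃ i : ℕ, M < time i

/-- `μ(ρ)`: the last timestamp of a finite timed word. -/
def TimedWord.last {A : Type} (ρ : TimedWord A) : ℝ := ρ.time (ρ.len.toNat - 1)

/-- `t` belongs to the time domain of `ρ` (all of `ℝ≥0`, or `[0, μ(ρ)]` if `ρ` is finite). -/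
def TimedWord.inDom {A : Type} (ρ : TimedWord A) (t : ℝ) : Prop :=
  0 ≤ t ∧ (ρ.len ≠ ⊤ → t ≤ ρ.last)

/-- Intervals of `ℝ≥0` with endpoints in `ℕ ∪ {∞}`. -/
structure TimeIntv where
  lo : ℕ
  hi : ℕ∞
  loOpen : Bool
  hiOpen : Bool

/-- Membership of a real number in a `TimeIntv`. -/
def TimeIntv.mem (I : TimeIntv) (x : ℝ) : Prop :=
  (if I.loOpen then (I.lo : ℝ) < x else (I.lo : ℝ) ≤ x) ∧
  (∀ n : ℕ, I.hi = (n : ℕ∞) → if I.hiOpen then x < (n : ℝ) else x ≤ (n : ℝ))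

/-- MTL formulas: `φ ::= a | ¬φ | φ ∧ ψ | φ U_I ψ`. -/
inductive MTL (A : Type) : Type
  | atom : A → MTL A
  | neg : MTL A → MTL A
  | conj : MTL A → MTL A → MTL A
  | untl : MTL A → TimeIntv → MTL A → MTL A

/-- Pointwise semantics `ρ, i ⊨_pw φ` of MTL over timed words. -/
def pwSat {A : Type} (ρ : TimedWord A) : MTL A → ℕ → Prop
  | .atom a, i => ρ.act i = a
  | .neg φ, i => ¬ pwSat ρ φ i
  | .conj φ ψ, i => pwSat ρ φ i ∧ pwSat ρ ψ i
  | .untl φ I ψ, i => ∃ j : ℕ, i < j ∧ (j : ℕ∞) < ρ.len ∧ I.mem (ρ.time j - ρ.time i) ∧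
      pwSat ρ ψ j ∧ ∀ k : ℕ, i < k → k < j → pwSat ρ φ k

/-- Interval-based timed-word semantics `ρ, t ⊨_itw φ` of MTL over timed words. -/
def itwSat {A : Type} (ρ : TimedWord A) : MTL A → ℝ → Prop
  | .atom a, t => ∃ i : ℕ, (i : ℕ∞) < ρ.len ∧ ρ.act i = a ∧ ρ.time i = t
  | .neg φ, t => ¬ itwSat ρ φ t
  | .conj φ ψ, t => itwSat ρ φ t ∧ itwSat ρ ψ t
  | .untl φ I ψ, t => ∃ t' : ℝ, t < t' ∧ ρ.inDom t' ∧ I.mem (t' - t) ∧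
      itwSat ρ ψ t' ∧ ∀ t'' : ℝ, t < t'' → t'' < t' → itwSat ρ φ t''

/-- Compact timed words: finite or infinite sequences of nonempty finite words over `A`
together with strictly increasing nonnegative timestamps (time-divergent if infinite). -/
structure CompactTW (A : Type) where
  len : ℕ∞
  word : ℕ → List A
  time : ℕ → ℝ
  nonneg : ∀ i : ℕ, (i : ℕ∞) < len → 0 ≤ time i
  word_ne : ∀ i : ℕ, (i : ℕ∞) < len → word i ≠ []
  strict : ∀ i j : ℕ, i < j → (j : ℕ∞) < len → time i < time j
  div : len = ⊤ → ∀ M : ℝ, ∃ i : ℕ, M < time i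

/-- `μ(ρ̃)`: the last timestamp of a finite compact timed word. -/
def CompactTW.last {A : Type} (ρ : CompactTW A) : ℝ := ρ.time (ρ.len.toNat - 1)

/-- `t` is a timestamp of `ρ̃` (i.e. `ind_ρ̃(t)` is defined). -/
def CompactTW.IsStamp {A : Type} (ρ : CompactTW A) (t : ℝ) : Prop :=
  ∃ i : ℕ, (i : ℕ∞) < ρ.len ∧ ρ.time i = t

open Classical in
/-- `ρ̃(t)`: the word `σ̃_i` if `τ̃_i = t` for some `i`, and the empty word otherwise. -/
noncomputable def CompactTW.atTime {A : Type} (ρ : CompactTW A) (t : ℝ) : List A :=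
  if h : ∃ i : ℕ, (i : ℕ∞) < ρ.len ∧ ρ.time i = t then ρ.word h.choose else []

/-- Lexicographic order on pairs `(t, j)`. -/
def LexLt (t : ℝ) (j : ℕ) (t' : ℝ) (j' : ℕ) : Prop := t < t' ∨ (t = t' ∧ j < j')

/-- Admissible pairs `(t, j)` for the mixed semantics over `ρ̃`:
`t ∈ ℝ≥0` (with `t ≤ μ(ρ̃)` if `ρ̃` is finite) and `0 ≤ j < max 1 |ρ̃(t)|`. -/
def CompactTW.Adm {A : Type} (ρ : CompactTW A) (t : ℝ) (j : ℕ) : Prop :=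
  0 ≤ t ∧ (ρ.len ≠ ⊤ → t ≤ ρ.last) ∧ j < max 1 (ρ.atTime t).length

/-- The start index of the `k`-th block, given block-end indices `s`. -/
def bstart (s : ℕ → ℕ) : ℕ → ℕ
  | 0 => 0
  | k + 1 => s k + 1

/-- The `k`-th block of actions `σ_{start k} … σ_{s k}` of a timed word. -/
def blockWord {A : Type} (ρ : TimedWord A) (s : ℕ → ℕ) (k : ℕ) : List A :=
  (List.range (s k + 1 - bstart s k)).map fun m => ρ.act (bstart s k + m)

/-- `ρc` is the compaction `C(ρ)` of `ρ`, witnessed by the sequence `s = sτ` of the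
indices of the last elements of the maximal constant factors of `τ`:
blocks are nonoverlapping, consecutive, cover all of `ρ`, carry a constant
timestamp, and `ρc` records exactly their action words and timestamps. -/
def IsCompactionWith {A : Type} (ρ : TimedWord A) (ρc : CompactTW A) (s : ℕ → ℕ) : Prop :=
  (∀ k : ℕ, (k : ℕ∞) < ρc.len →
      ((s k : ℕ∞) < ρ.len ∧ ρc.time k = ρ.time (s k) ∧ ρc.word k = blockWord ρ s k ∧
        ∀ i : ℕ, bstart s k ≤ i → i ≤ s k → ρ.time i = ρ.time (s k))) ∧
  (∀ k : ℕ, ((k + 1 : ℕ) : ℕ∞) < ρc.len → s k < s (k + 1)) ∧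
  (∀ i : ℕ, (i : ℕ∞) < ρ.len → ∃ k : ℕ, (k : ℕ∞) < ρc.len ∧ bstart s k ≤ i ∧ i ≤ s k)

/-- `ρc = C(ρ)`. -/
def IsCompaction {A : Type} (ρ : TimedWord A) (ρc : CompactTW A) : Prop :=
  ∃ s : ℕ → ℕ, IsCompactionWith ρ ρc s

/-- MTL extended with the atom `φ_Σ`. -/
inductive MTLS (A : Type) : Type
  | atom : A → MTLS A
  | sig : MTLS A
  | neg : MTLS A → MTLS A
  | conj : MTLS A → MTLS A → MTLS A
  | untl : MTLS A → TimeIntv → MTLS A → MTLS A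

/-- Disjunction, as the usual abbreviation. -/
def MTLS.disj {A : Type} (φ ψ : MTLS A) : MTLS A := .neg (.conj (.neg φ) (.neg ψ))

/-- Mixed semantics `ρ̃, t, j ⊨_mx φ` of MTL extended with `φ_Σ` over compact timed words. -/
def mxSat {A : Type} (ρ : CompactTW A) : MTLS A → ℝ → ℕ → Prop
  | .atom a, t, j => (ρ.atTime t)[j]? = some a
  | .sig, t, _ => ρ.atTime t ≠ []
  | .neg φ, t, j => ¬ mxSat ρ φ t j
  | .conj φ ψ, t, j => mxSat ρ φ t j ∧ mxSat ρ ψ t j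
  | .untl φ I ψ, t, j => ∃ (t₁ : ℝ) (j₁ : ℕ), LexLt t j t₁ j₁ ∧ ρ.Adm t₁ j₁ ∧
      I.mem (t₁ - t) ∧ mxSat ρ ψ t₁ j₁ ∧
      ∀ (t₂ : ℝ) (j₂ : ℕ), LexLt t j t₂ j₂ → LexLt t₂ j₂ t₁ j₁ → ρ.Adm t₂ j₂ →
        mxSat ρ φ t₂ j₂

/-- The pointwise compilation `⟨·⟩` of MTL into MTL extended with `φ_Σ`. -/
def pcompile {A : Type} : MTL A → MTLS A
  | .atom a => .atom a
  | .neg φ => .conj .sig (.neg (pcompile φ))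
  | .conj φ ψ => .conj .sig (.conj (pcompile φ) (pcompile ψ))
  | .untl φ I ψ =>
      .conj .sig (.untl (MTLS.disj (pcompile φ) (.neg .sig)) I (.conj (pcompile ψ) .sig))

/-- MTL extended with the atom `β`. -/
inductive MTLB (A : Type) : Type
  | atom : A → MTLB A
  | beta : MTLB A
  | neg : MTLB A → MTLB A
  | conj : MTLB A → MTLB A → MTLB A
  | untl : MTLB A → TimeIntv → MTLB A → MTLB A

def MTLB.disj {A : Type} (φ ψ : MTLB A) : MTLB A := .neg (.conj (.neg φ) (.neg ψ))

/-- `⊤`, encoded as the tautology `¬(β ∧ ¬β)`. -/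
def MTLB.top {A : Type} : MTLB A := .neg (.conj .beta (.neg .beta))

/-- Mixed semantics of MTL extended with `β` (`β` holds at `(t,j)` iff `j = 0`). -/
def mxSatB {A : Type} (ρ : CompactTW A) : MTLB A → ℝ → ℕ → Prop
  | .atom a, t, j => (ρ.atTime t)[j]? = some a
  | .beta, _, j => j = 0
  | .neg φ, t, j => ¬ mxSatB ρ φ t j
  | .conj φ ψ, t, j => mxSatB ρ φ t j ∧ mxSatB ρ ψ t j
  | .untl φ I ψ, t, j => ∃ (t₁ : ℝ) (j₁ : ℕ), LexLt t j t₁ j₁ ∧ ρ.Adm t₁ j₁ ∧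
      I.mem (t₁ - t) ∧ mxSatB ρ ψ t₁ j₁ ∧
      ∀ (t₂ : ℝ) (j₂ : ℕ), LexLt t j t₂ j₂ → LexLt t₂ j₂ t₁ j₁ → ρ.Adm t₂ j₂ →
        mxSatB ρ φ t₂ j₂

/-- The interval compilation `⟦·⟧` of MTL into MTL extended with `β`. -/
def icompile {A : Type} : MTL A → MTLB A
  | .atom a => MTLB.disj (.atom a) (.untl MTLB.top ⟨0, (0 : ℕ∞), false, false⟩ (.atom a))
  | .neg φ => .neg (icompile φ)
  | .conj φ ψ => .conj (icompile φ) (icompile ψ)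
  | .untl φ I ψ => .untl (MTLB.disj (.neg .beta) (icompile φ)) I (.conj .beta (icompile ψ))

/-- Elements `κ = (η, ι)` of `K_a`: equal-length sequences of action sets `η_i ⊆ Σ`
and intervals `ι_i` of `ℝ≥0` forming a consecutive partition of an initial segment
of `ℝ≥0` (all of `ℝ≥0` in the infinite case), with even-indexed intervals punctual
carrying a nonempty action set, odd-indexed intervals non-punctual carrying the
empty action set, and (for finite `κ`) a punctual last interval. -/
structure KElem (A : Type) where
  len : ℕ∞
  eta : ℕ → Set A
  iv : ℕ → Set ℝ
  iv_conn : ∀ i : ℕ, (i : ℕ∞) < len → (iv i).OrdConnected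
  iv_nonneg : ∀ i : ℕ, (i : ℕ∞) < len → iv i ⊆ Set.Ici (0 : ℝ)
  iv_nonempty : ∀ i : ℕ, (i : ℕ∞) < len → (iv i).Nonempty
  iv_ordered : ∀ i j : ℕ, i < j → (j : ℕ∞) < len → ∀ x ∈ iv i, ∀ y ∈ iv j, x < y
  initialSeg : ∀ x y : ℝ, (∃ i : ℕ, (i : ℕ∞) < len ∧ x ∈ iv i) → 0 ≤ y → y ≤ x →
      ∃ i : ℕ, (i : ℕ∞) < len ∧ y ∈ iv i
  zero_cov : ∃ i : ℕ, (i : ℕ∞) < len ∧ (0 : ℝ) ∈ iv i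
  inf_cover : len = ⊤ → ∀ x : ℝ, 0 ≤ x → ∃ i : ℕ, x ∈ iv i
  even_punct : ∀ i : ℕ, ((2 * i : ℕ) : ℕ∞) < len →
      (∃ t : ℝ, iv (2 * i) = {t}) ∧ (eta (2 * i)).Nonempty
  odd_nonpunct : ∀ i : ℕ, ((2 * i + 1 : ℕ) : ℕ∞) < len →
      (¬ ∃ t : ℝ, iv (2 * i + 1) = {t}) ∧ eta (2 * i + 1) = ∅
  last_punct : ∀ n : ℕ, len = ((n + 1 : ℕ) : ℕ∞) → ∃ t : ℝ, iv n = {t}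

/-- The relation `R` between compact timed words and elements of `K_a`. -/
def Rrel {A : Type} (ρ : CompactTW A) (κ : KElem A) : Prop :=
  ((ρ.len = ⊤ ∧ κ.len = ⊤) ∨
    ∃ n : ℕ, ρ.len = (n : ℕ∞) ∧ κ.len = ((2 * n - 1 : ℕ) : ℕ∞)) ∧
  ∀ i : ℕ, (i : ℕ∞) < ρ.len →
    ({a | a ∈ ρ.word i} = κ.eta (2 * i) ∧ κ.iv (2 * i) = {ρ.time i})

/-- The signal `F(ρ)` induced by a timed word: `F(ρ)(t) = {a | ∃ i, σ_i = a ∧ τ_i = t}`. -/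
def sigOf {A : Type} (ρ : TimedWord A) : ℝ → Set A :=
  fun t => {a | ∃ i : ℕ, (i : ℕ∞) < ρ.len ∧ ρ.act i = a ∧ ρ.time i = t}

/-- The domain of the signal `F(ρ)`: `ℝ≥0`, or `[0, μ(ρ)]` if `ρ` is finite. -/
def sigDom {A : Type} (ρ : TimedWord A) : Set ℝ :=
  if ρ.len = ⊤ then Set.Ici (0 : ℝ) else Set.Icc 0 ρ.last

/-- Interval-based signal semantics `s, t ⊨_its φ` (over a signal with domain `dom`). -/
def itsSat {A : Type} (dom : Set ℝ) (s : ℝ → Set A) : MTL A → ℝ → Prop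
  | .atom a, t => a ∈ s t
  | .neg φ, t => ¬ itsSat dom s φ t
  | .conj φ ψ, t => itsSat dom s φ t ∧ itsSat dom s ψ t
  | .untl φ I ψ, t => ∃ t' : ℝ, t < t' ∧ t' ∈ dom ∧ I.mem (t' - t) ∧
      itsSat dom s ψ t' ∧ ∀ t'' : ℝ, t < t'' → t'' < t' → itsSat dom s φ t''

/-- The pointwise language `L_pw(φ)`. -/
def Lpw {A : Type} (φ : MTL A) : Set (TimedWord A) :=
  {ρ | (0 : ℕ∞) < ρ.len ∧ pwSat ρ φ 0}

/-- The interval-based language `L_itw(φ)`. -/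
def Litw {A : Type} (φ : MTL A) : Set (TimedWord A) :=
  {ρ | (0 : ℕ∞) < ρ.len ∧ itwSat ρ φ 0}

/-- `⊤`, encoded as the tautology `¬(b ∧ ¬b)`. -/
def mtop {A : Type} (b : A) : MTL A := .neg (.conj (.atom b) (.neg (.atom b)))

/-- `◇_I φ := ⊤ U_I φ`. -/
def ev {A : Type} (b : A) (I : TimeIntv) (φ : MTL A) : MTL A := .untl (mtop b) I φ

/-- `γ₂ = ◇_{(0,1]}(◇_{[0,1)} b ∧ ◇_{[1,1]} c)`. -/
def gamma2 {A : Type} (b c : A) : MTL A :=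
  ev b ⟨0, (1 : ℕ∞), true, false⟩
    (.conj (ev b ⟨0, (1 : ℕ∞), false, true⟩ (.atom b))
           (ev b ⟨1, (1 : ℕ∞), false, false⟩ (.atom c)))

/-- The language `B`: infinite timed words with positions `i < j`, `τ_i ∈ (0,2)`,
`σ_i = b`, `τ_j ∈ (1,2]`, `σ_j = c`, and `τ_j − τ_i ∈ (0,1)`. -/
def Bset {A : Type} (b c : A) : Set (TimedWord A) :=
  {ρ | ρ.len = ⊤ ∧ ∃ i j : ℕ, i < j ∧
    0 < ρ.time i ∧ ρ.time i < 2 ∧ ρ.act i = b ∧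
    1 < ρ.time j ∧ ρ.time j ≤ 2 ∧ ρ.act j = c ∧
    0 < ρ.time j - ρ.time i ∧ ρ.time j - ρ.time i < 1}

/-- The language `Z`: infinite timed words with a position `i ≥ 1` where `b` is
immediately followed by `a`. -/
def Zset {A : Type} (a b : A) : Set (TimedWord A) :=
  {ρ | ρ.len = ⊤ ∧ ∃ i : ℕ, 1 ≤ i ∧ ρ.act i = b ∧ ρ.act (i + 1) = a}

/-- The language `G`: infinite timed words with no timestamp in `(0,2]`. -/
def Gset {A : Type} : Set (TimedWord A) :=
  {ρ | ρ.len = ⊤ ∧ ∀ i : ℕ, ¬ (0 < ρ.time i ∧ ρ.time i ≤ 2)}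

/-- `m_ρ̃`: `m(0, j) = j` and `m(k+1, j) = sτ_k + j + 1`. -/
def mfun (s : ℕ → ℕ) : ℕ → ℕ → ℕ
  | 0, j => j
  | k + 1, j => s k + j + 1

theorem mfun_eq (s : ℕ → ℕ) (k j : ℕ) : mfun s k j = bstart s k + j := by
  cases k <;> simp [mfun, bstart]; omega

theorem atTime_stamp {A : Type} (ρc : CompactTW A) (k : ℕ) (hk : (k : ℕ∞) < ρc.len) :
    ρc.atTime (ρc.time k) = ρc.word k := by
  have h : ∃ i : ℕ, (i : ℕ∞) < ρc.len ∧ ρc.time i = ρc.time k := ⟨k, hk, rfl⟩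
  obtain ⟨h1, h2⟩ := h.choose_spec
  have he : h.choose = k := by
    rcases lt_trichotomy h.choose k with hlt | heq | hgt
    · exact absurd h2 (ρc.strict _ _ hlt hk).ne
    · exact heq
    · exact absurd h2 (ρc.strict _ _ hgt h1).ne'
  rw [CompactTW.atTime, dif_pos h, he]

theorem exists_stamp {A : Type} (ρc : CompactTW A) (t : ℝ) (h : ρc.atTime t ≠ []) :
    ∃ k : ℕ, (k : ℕ∞) < ρc.len ∧ ρc.time k = t := by
  by_contra hn
  exact h (by rw [CompactTW.atTime, dif_neg hn])

theorem adm_stamp {A : Type} (ρc : CompactTW A) (k j : ℕ) (hk : (k : ℕ∞) < ρc.len)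
    (hj : j < (ρc.word k).length) : ρc.Adm (ρc.time k) j := by
  refine ⟨ρc.nonneg k hk, fun hfin => ?_, ?_⟩
  · obtain ⟨n, hn⟩ := ENat.ne_top_iff_exists.mp hfin
    have hkn : k < n := by rw [← hn] at hk; exact_mod_cast hk
    rw [CompactTW.last, ← hn, ENat.toNat_natCast]
    rcases (show k ≤ n - 1 by omega).eq_or_lt with he | hlt
    · rw [← he]
    · refine (ρc.strict _ _ hlt ?_).le
      rw [← hn]
      exact_mod_cast (show n - 1 < n by omega)
  · rw [atTime_stamp ρc k hk]
    exact lt_max_of_lt_right hj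

theorem word_length {A : Type} {ρ : TimedWord A} {ρc : CompactTW A} {s : ℕ → ℕ}
    (hC : IsCompactionWith ρ ρc s) (k : ℕ) (hk : (k : ℕ∞) < ρc.len) :
    (ρc.word k).length = s k + 1 - bstart s k := by
  rw [(hC.1 k hk).2.2.1, blockWord, List.length_map, List.length_range]

/-- A pair `(k, j)` in range denotes a position of `ρ` whose timestamp is `τ̃_k`. -/
theorem position_spec {A : Type} {ρ : TimedWord A} {ρc : CompactTW A} {s : ℕ → ℕ}
    (hC : IsCompactionWith ρ ρc s) (k j : ℕ) (hk : (k : ℕ∞) < ρc.len)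
    (hj : j < (ρc.word k).length) :
    ((bstart s k + j : ℕ) : ℕ∞) < ρ.len ∧ ρ.time (bstart s k + j) = ρc.time k := by
  rw [word_length hC k hk] at hj
  obtain ⟨h1, h2, -, h4⟩ := hC.1 k hk
  have hle : bstart s k + j ≤ s k := by omega
  exact ⟨lt_of_le_of_lt (by exact_mod_cast hle) h1, by rw [h4 _ (by omega) hle, h2]⟩

theorem block_end_lt_bstart {A : Type} {ρ : TimedWord A} {ρc : CompactTW A} {s : ℕ → ℕ}
    (hC : IsCompactionWith ρ ρc s) (k l : ℕ) (hkl : k < l) (hl : (l : ℕ∞) < ρc.len) :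
    s k < bstart s l := by
  induction l with
  | zero => omega
  | succ n ih =>
    show s k < s n + 1
    rcases (Nat.lt_succ_iff.mp hkl).eq_or_lt with he | hlt
    · rw [he]; omega
    · have hn : (n : ℕ∞) < ρc.len := lt_of_le_of_lt (by exact_mod_cast Nat.le_succ n) hl
      have h1 := ih hlt hn
      have h2 := word_length hC n hn
      have h3 := List.length_pos_iff.mpr (ρc.word_ne n hn)
      omega

theorem position_lt_iff {A : Type} {ρ : TimedWord A} {ρc : CompactTW A} {s : ℕ → ℕ}
    (hC : IsCompactionWith ρ ρc s) (k j l m : ℕ) (hk : (k : ℕ∞) < ρc.len)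
    (hj : j < (ρc.word k).length) (hl : (l : ℕ∞) < ρc.len) (hm : m < (ρc.word l).length) :
    LexLt (ρc.time k) j (ρc.time l) m ↔ bstart s k + j < bstart s l + m := by
  rw [word_length hC k hk] at hj
  rw [word_length hC l hl] at hm
  rcases lt_trichotomy k l with h | h | h
  · have h1 := block_end_lt_bstart hC k l h hl
    exact iff_of_true (Or.inl (ρc.strict _ _ h hl)) (by omega)
  · subst h
    simp [LexLt]
  · have h1 := block_end_lt_bstart hC l k h hk
    have h2 := ρc.strict _ _ h hk
    refine iff_of_false ?_ (by omega)
    rintro (h3 | ⟨h3, -⟩)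
    · exact lt_asymm h2 h3
    · exact h2.ne' h3

theorem exists_block {A : Type} {ρ : TimedWord A} {ρc : CompactTW A} {s : ℕ → ℕ}
    (hC : IsCompactionWith ρ ρc s) (i : ℕ) (hi : (i : ℕ∞) < ρ.len) :
    ∃ k j : ℕ, (k : ℕ∞) < ρc.len ∧ j < (ρc.word k).length ∧ i = bstart s k + j := by
  obtain ⟨k, hk, h1, h2⟩ := hC.2.2 i hi
  refine ⟨k, i - bstart s k, hk, ?_, by omega⟩
  rw [word_length hC k hk]
  omega

/-- Correctness of the compilation, with points of `ρ̃` and positions of `ρ` both given by a block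
index `k` and an offset `j` into that block. -/
theorem pcompile_correct_block {A : Type} {ρ : TimedWord A} {ρc : CompactTW A} {s : ℕ → ℕ}
    (hC : IsCompactionWith ρ ρc s) (φ : MTL A) : ∀ k j : ℕ, (k : ℕ∞) < ρc.len →
      j < (ρc.word k).length →
      (mxSat ρc (pcompile φ) (ρc.time k) j ↔ pwSat ρ φ (bstart s k + j)) := by
  have hsig : ∀ k : ℕ, (k : ℕ∞) < ρc.len → ρc.atTime (ρc.time k) ≠ [] := fun k hk => by
    rw [atTime_stamp ρc k hk]; exact ρc.word_ne k hk
  induction φ with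
  | atom a =>
    intro k j hk hj
    have hl := word_length hC k hk
    simp only [pcompile, mxSat, pwSat]
    rw [atTime_stamp ρc k hk, (hC.1 k hk).2.2.1, blockWord, List.getElem?_map,
      List.getElem?_range (by omega)]
    simp
  | neg φ ih =>
    intro k j hk hj
    simp only [pcompile, mxSat, pwSat]
    rw [ih k j hk hj]
    exact and_iff_right (hsig k hk)
  | conj φ ψ ih₁ ih₂ =>
    intro k j hk hj
    simp only [pcompile, mxSat, pwSat]
    rw [ih₁ k j hk hj, ih₂ k j hk hj]
    exact and_iff_right (hsig k hk)
  | untl φ I ψ ih₁ ih₂ =>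
    intro k j hk hj
    simp only [pcompile, MTLS.disj, mxSat, pwSat]
    rw [and_iff_right (hsig k hk), (position_spec hC k j hk hj).2]
    constructor
    · rintro ⟨t₁, j₁, hlt, hadm, hI, ⟨hψ, hs⟩, hall⟩
      obtain ⟨k₁, hk₁, rfl⟩ := exists_stamp ρc t₁ hs
      have hj₁ : j₁ < (ρc.word k₁).length := by
        have h := hadm.2.2
        have hpos := List.length_pos_iff.mpr (ρc.word_ne k₁ hk₁)
        rw [atTime_stamp ρc k₁ hk₁] at h
        omega
      obtain ⟨hlen, htime⟩ := position_spec hC k₁ j₁ hk₁ hj₁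
      refine ⟨bstart s k₁ + j₁, (position_lt_iff hC k j k₁ j₁ hk hj hk₁ hj₁).mp hlt, hlen,
        by rwa [htime], (ih₂ k₁ j₁ hk₁ hj₁).mp hψ, fun i hi₁ hi₂ => ?_⟩
      obtain ⟨k₂, j₂, hk₂, hj₂, rfl⟩ :=
        exists_block hC i (lt_trans (by exact_mod_cast hi₂) hlen)
      rw [← ih₁ k₂ j₂ hk₂ hj₂]
      by_contra hφ
      exact hall _ j₂ ((position_lt_iff hC k j k₂ j₂ hk hj hk₂ hj₂).mpr hi₁)
        ((position_lt_iff hC k₂ j₂ k₁ j₁ hk₂ hj₂ hk₁ hj₁).mpr hi₂)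
        (adm_stamp ρc k₂ j₂ hk₂ hj₂) ⟨hφ, fun h => h (hsig k₂ hk₂)⟩
    · rintro ⟨i, hlt, hlen, hI, hψ, hall⟩
      obtain ⟨k₁, j₁, hk₁, hj₁, rfl⟩ := exists_block hC i hlen
      rw [(position_spec hC k₁ j₁ hk₁ hj₁).2] at hI
      refine ⟨ρc.time k₁, j₁, (position_lt_iff hC k j k₁ j₁ hk hj hk₁ hj₁).mpr hlt,
        adm_stamp ρc k₁ j₁ hk₁ hj₁, hI, ⟨(ih₂ k₁ j₁ hk₁ hj₁).mpr hψ, hsig k₁ hk₁⟩, ?_⟩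
      rintro t₂ j₂ h₁ h₂ hadm ⟨hφ, hs⟩
      rw [not_not] at hs
      obtain ⟨k₂, hk₂, rfl⟩ := exists_stamp ρc t₂ hs
      have hj₂ : j₂ < (ρc.word k₂).length := by
        have h := hadm.2.2
        have hpos := List.length_pos_iff.mpr (ρc.word_ne k₂ hk₂)
        rw [atTime_stamp ρc k₂ hk₂] at h
        omega
      exact hφ ((ih₁ k₂ j₂ hk₂ hj₂).mpr (hall _
        ((position_lt_iff hC k j k₂ j₂ hk hj hk₂ hj₂).mp h₁)
        ((position_lt_iff hC k₂ j₂ k₁ j₁ hk₂ hj₂ hk₁ hj₁).mp h₂)))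

/-- at timestamps, `ρ̃, t, j ⊨_mx ⟨φ⟩` iff
`C⁻¹(ρ̃), m_ρ̃(ind_ρ̃(t), j) ⊨_pw φ`. -/
theorem pcompile_correct_at_stamps (A : Type) [Fintype A] (φ : MTL A)
    (ρ : TimedWord A) (ρc : CompactTW A) (s : ℕ → ℕ) (hC : IsCompactionWith ρ ρc s)
    (t : ℝ) (i j : ℕ) (ht0 : 0 ≤ t) (htμ : ρc.len ≠ ⊤ → t ≤ ρc.last)
    (hi : (i : ℕ∞) < ρc.len) (hit : ρc.time i = t) (hj : j < (ρc.atTime t).length) :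
    mxSat ρc (pcompile φ) t j ↔ pwSat ρ φ (mfun s i j) := by
  subst hit
  rw [atTime_stamp ρc i hi] at hj
  rw [mfun_eq]
  exact pcompile_correct_block hC φ i j hi hj
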